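/- Let φ : ℕ → ℂ. Then φ belongs to R₊(T_∞), i.e. the kernel (x,y) ↦ φ(d(x,y)) is positive definite on the homogeneous tree T_∞ of countably infinite degree, if and only if there exists a positive finite Borel measure μ on the interval [-1,1] such that φ(n) = ∫_{[-1,1]} s^n dμ(s) for all n ∈ ℕ. -/

import Mathlib

/-!
The functions `φ` for which `φ(d(x, y))` is positive definite on the tree `T_∞` are the moment
sequences of finite measures on `[-1, 1]`.

*Moments give positive definite kernels.* It suffices to treat `φ n = s ^ n` with `|s| ≤ 1` and
integrate. Root the tree at `o` and define vectors in `ℓ²(V)` by `v_o = δ_o` and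
`v_x = s v_{parent x} + √(1 - s²) δ_x`. If `x` is at least as far from the root as `y ≠ x`, the
geodesic from `x` to `y` passes through the parent of `x` (`dist_eq_of_parent`), and induction
gives `⟨v_x, v_y⟩ = s ^ d(x, y)` (`inner_treeVec`).

*Positive definite kernels give moments.* Take `N` rays issuing from a vertex of the tree and put
the weight `a_k` at the `k`-th vertex of each. Vertices of levels `k`, `l` on different rays are at
distance `k + l`, and pairs on a common ray are negligible as `N → ∞`, so
`∑ a_k a_l φ(k + l) ≥ 0` (`hankel_nonneg`). Moreover `φ` is real and bounded by `φ 0`. Let `L` be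
the functional on polynomials with `L (X ^ n) = φ n`. It is nonnegative on squares; iterating the
Cauchy–Schwarz inequality and using boundedness, it is nonnegative on `q² (1 ± X)` and
`q² (1 - X²)` as well (`momentFunctional_nonneg_of_mem`). Polynomials positive on `[-1, 1]` are
sums of such terms, by factorization (`mem_posSemiring_of_pos`). So `L` is nonnegative on
polynomials that are nonnegative on `[-1, 1]`; the M. Riesz extension theorem and the
Riesz–Markov–Kakutani theorem provide the measure (`exists_measure_of_hankel`).
-/


open MeasureTheory Filter Finset
open scoped ComplexOrder

/-- The polynomials `P_n^{(q)}`. -/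
noncomputable def treeP (q : ℕ) : ℕ → ℝ → ℝ
  | 0, _ => 1
  | 1, x => x
  | (n+2), x => (1 + 1/(q:ℝ)) * x * treeP q (n+1) x - (1/(q:ℝ)) * treeP q n x

/-- The polynomials `Q_n^{(q)}`. -/
noncomputable def treeQ (q : ℕ) : ℕ → ℝ → ℝ
  | 0, _ => 1
  | 1, x => (1 + 1/(q:ℝ)) * x
  | (n+2), x => (1 + 1/(q:ℝ)) * x * treeQ q (n+1) x - (1/(q:ℝ)) * treeQ q n x

/-- A kernel `ψ` on a set `X` is positive definite. -/
def IsPDKernel {X : Type*} (ψ : X → X → ℂ) : Prop :=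
  ∀ (n : ℕ) (x : Fin n → X) (z : Fin n → ℂ),
    0 ≤ ∑ i, ∑ j, ψ (x i) (x j) * (starRingEnd ℂ) (z i) * z j

/-- `G` is a `(q+1)`-homogeneous tree: connected, acyclic, every vertex has exactly
`q+1` neighbours. -/
def IsHomTree {V : Type} (G : SimpleGraph V) (q : ℕ) : Prop :=
  G.Connected ∧ G.IsAcyclic ∧ ∀ v : V, (G.neighborSet v).ncard = q + 1

/-- `G` is a homogeneous tree of countably infinite degree. -/
def IsInfTree {V : Type} (G : SimpleGraph V) : Prop :=
  G.Connected ∧ G.IsAcyclic ∧ ∀ v : V, (G.neighborSet v).Countable ∧ (G.neighborSet v).Infinite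

/-! ### The kernel `s ^ d(x, y)` on a tree -/

section Tree

variable {V : Type} {G : SimpleGraph V}

/-- In a tree every path is a geodesic. -/
lemma length_eq_dist_of_isPath (hc : G.Connected) (ha : G.IsAcyclic) {x y : V}
    (w : G.Walk x y) (hw : w.IsPath) : w.length = G.dist x y := by
  obtain ⟨p, hp, hl⟩ := hc.exists_path_of_dist x y
  have : (⟨w, hw⟩ : G.Path x y) = ⟨p, hp⟩ := (ha.subsingleton_path x y).elim _ _
  rw [← hl, Subtype.mk.inj this]

lemma exists_parent (hc : G.Connected) (o x : V) (hx : x ≠ o) :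
    ∃ y, G.Adj x y ∧ G.dist o x = G.dist o y + 1 := by
  obtain ⟨p, hp⟩ := hc.exists_walk_length_eq_dist x o
  cases p with
  | nil => exact absurd rfl hx
  | @cons _ y _ h q =>
    refine ⟨y, h, le_antisymm ?_ ?_⟩
    · have := hc.dist_triangle (u := o) (v := y) (w := x)
      rw [SimpleGraph.dist_eq_one_iff_adj.mpr h.symm] at this
      exact this
    · rw [SimpleGraph.dist_comm (v := x), ← hp, SimpleGraph.dist_comm, SimpleGraph.Walk.length_cons]
      exact Nat.succ_le_succ (SimpleGraph.dist_le q)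

lemma dist_le_of_mem_support {o y u : V} (w : G.Walk o y)
    (hw : w.length = G.dist o y) (hu : u ∈ w.support) :
    G.dist o u + G.dist u y ≤ G.dist o y := by
  classical
  rw [← hw, ← w.take_spec hu, SimpleGraph.Walk.length_append]
  exact add_le_add (SimpleGraph.dist_le _) (SimpleGraph.dist_le _)

/-- If `q` is the parent of `x` with respect to the root `o`, and `y ≠ x` is no farther from the
root than `x`, then the geodesic from `x` to `y` passes through `q`: the walk `q → o → y` along
geodesics avoids `x`, so it shortens to a path which can be prolonged to `x`. -/
lemma dist_eq_of_parent (hc : G.Connected) (ha : G.IsAcyclic) {o x q y : V} (hq : G.Adj x q)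
    (hd : G.dist o x = G.dist o q + 1) (hy : G.dist o y ≤ G.dist o x) (hxy : y ≠ x) :
    G.dist x y = G.dist q y + 1 := by
  classical
  obtain ⟨a, hal⟩ := hc.exists_walk_length_eq_dist o q
  obtain ⟨b, hbl⟩ := hc.exists_walk_length_eq_dist o y
  have hxa : x ∉ a.support := fun h => by
    have := dist_le_of_mem_support a hal h
    omega
  have hxb : x ∉ b.support := fun h => by
    have := dist_le_of_mem_support b hbl h
    have := hc.pos_dist_of_ne hxy.symm
    omega
  let w := (a.reverse.append b).bypass
  have hwp : w.IsPath := SimpleGraph.Walk.bypass_isPath _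
  have hxw : x ∉ w.support := fun h => by
    have := SimpleGraph.Walk.support_bypass_subset_support _ h
    rw [SimpleGraph.Walk.mem_support_append_iff, SimpleGraph.Walk.support_reverse,
      List.mem_reverse] at this
    tauto
  have h1 := length_eq_dist_of_isPath hc ha w hwp
  have h2 := length_eq_dist_of_isPath hc ha (SimpleGraph.Walk.cons hq w)
    ((SimpleGraph.Walk.cons_isPath_iff _ _).mpr ⟨hwp, hxw⟩)
  rw [← h1, ← h2, SimpleGraph.Walk.length_cons]

/-- The parent map of the tree rooted at `o`. -/
noncomputable def parent (hc : G.Connected) (o x : V) : V :=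
  open Classical in if h : x = o then o else (exists_parent hc o x h).choose

lemma parent_spec (hc : G.Connected) (o x : V) (hx : x ≠ o) :
    G.Adj x (parent hc o x) ∧ G.dist o x = G.dist o (parent hc o x) + 1 := by
  rw [parent, dif_neg hx]
  exact (exists_parent hc o x hx).choose_spec

open Classical in
/-- The vector attached to a vertex `x` at level `n`, in the Hilbert space `ℓ²(V)`, built from the
root along the geodesic by `v_x = s • v_{parent x} + √(1 - s²) • δ_x` and `v_o = δ_o`. It is only
meaningful when `n` is the distance from `x` to the root `o`. -/
noncomputable def treeVec (hc : G.Connected) (o : V) (s : ℝ) : ℕ → V → lp (fun _ : V => ℂ) 2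
  | 0, x => lp.single 2 x 1
  | n + 1, x => (s : ℂ) • treeVec hc o s n (parent hc o x) +
      ((Real.sqrt (1 - s ^ 2) : ℝ) : ℂ) • lp.single 2 x 1

lemma treeVec_apply_eq_zero (hc : G.Connected) (o : V) (s : ℝ) (n : ℕ) (x y : V)
    (hx : G.dist o x = n) (hy : n ≤ G.dist o y) (hxy : x ≠ y) :
    treeVec hc o s n x y = 0 := by
  classical
  induction n generalizing x with
  | zero => simp [treeVec, lp.single_apply, hxy.symm]
  | succ n ih =>
    have hxo : x ≠ o := by rintro rfl; simp at hx
    have hp := (parent_spec hc o x hxo).2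
    have := ih (parent hc o x) (by omega) (by omega) (by intro h; rw [h] at hp; omega)
    rw [treeVec, lp.coeFn_add, Pi.add_apply, lp.coeFn_smul, lp.coeFn_smul, Pi.smul_apply,
      Pi.smul_apply, this, lp.single_apply_ne _ _ _ hxy.symm]
    simp

/-- The Gram matrix of the vectors `v_x` is `s ^ d(x, y)`. -/
lemma inner_treeVec (hc : G.Connected) (ha : G.IsAcyclic) (o : V) (s : ℝ) (hs : s ^ 2 ≤ 1)
    (n : ℕ) (x y : V) (hn : G.dist o x + G.dist o y ≤ n) :
    inner ℂ (treeVec hc o s (G.dist o x) x) (treeVec hc o s (G.dist o y) y)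
      = ((s ^ G.dist x y : ℝ) : ℂ) := by
  classical
  induction n generalizing x y with
  | zero =>
    have hx : o = x := hc.dist_eq_zero_iff.mp (by omega)
    have hy : o = y := hc.dist_eq_zero_iff.mp (by omega)
    subst hx; subst hy
    simp [treeVec]
  | succ n ih =>
    -- By symmetry it suffices to treat the case where `x` is the vertex farther from the root.
    have key : ∀ x y, G.dist o x + G.dist o y ≤ n + 1 → G.dist o y ≤ G.dist o x →
        inner ℂ (treeVec hc o s (G.dist o x) x) (treeVec hc o s (G.dist o y) y)
          = ((s ^ G.dist x y : ℝ) : ℂ) := by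
      intro x y hn hyx
      by_cases hxo : x = o
      · subst hxo
        have h0 : G.dist x x = 0 := SimpleGraph.dist_self
        exact ih _ _ (by omega)
      obtain ⟨hadj, hd⟩ := parent_spec hc o x hxo
      have hz : treeVec hc o s (G.dist o (parent hc o x)) (parent hc o x) x = 0 :=
        treeVec_apply_eq_zero hc o s _ _ _ rfl (by omega) hadj.ne'
      by_cases hxy : y = x
      · subst hxy
        have h1 := ih (parent hc o y) (parent hc o y) (by omega)
        simp only [SimpleGraph.dist_self, pow_zero] at h1 ⊢
        rw [hd]
        have hc2 : ((Real.sqrt (1 - s ^ 2) : ℝ) : ℂ) * ((Real.sqrt (1 - s ^ 2) : ℝ) : ℂ)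
            = 1 - (s : ℂ) ^ 2 := by
          rw [← Complex.ofReal_mul, Real.mul_self_sqrt (by linarith)]; push_cast; ring
        simp only [treeVec, inner_add_left, inner_add_right, inner_smul_left, inner_smul_right, h1,
          lp.inner_single_left, lp.inner_single_right, hz, Complex.conj_ofReal, lp.single_apply_self]
        simp
        linear_combination hc2
      · have h1 := ih (parent hc o x) y (by omega)
        have hz' := treeVec_apply_eq_zero hc o s (G.dist o y) y x rfl hyx hxy
        rw [dist_eq_of_parent hc ha hadj hd hyx hxy, hd]
        simp only [treeVec, inner_add_left, inner_smul_left, h1,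
          lp.inner_single_left, hz', Complex.conj_ofReal]
        simp
        ring
    rcases le_total (G.dist o y) (G.dist o x) with h | h
    · exact key x y hn h
    · rw [← inner_conj_symm, key y x (by omega) h, Complex.conj_ofReal, SimpleGraph.dist_comm]

lemma isPDKernel_inner {X E : Type*} [SeminormedAddCommGroup E] [InnerProductSpace ℂ E]
    (v : X → E) : IsPDKernel (fun x y => inner ℂ (v x) (v y)) := by
  intro n x z
  have : ∑ i, ∑ j, inner ℂ (v (x i)) (v (x j)) * (starRingEnd ℂ) (z i) * z j
      = inner ℂ (∑ i, z i • v (x i)) (∑ i, z i • v (x i)) := by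
    simp only [sum_inner, inner_sum, inner_smul_left, inner_smul_right]
    rw [Finset.sum_comm]
    refine Finset.sum_congr rfl fun i _ => ?_
    rw [Finset.mul_sum]
    exact Finset.sum_congr rfl fun j _ => by ring
  simp only [this]
  rw [inner_self_eq_norm_sq_to_K, ← RCLike.ofReal_pow]
  exact RCLike.ofReal_nonneg.mpr (sq_nonneg _)

lemma isPDKernel_pow_dist (hc : G.Connected) (ha : G.IsAcyclic) (s : ℝ) (hs : s ^ 2 ≤ 1) :
    IsPDKernel (fun x y => ((s ^ G.dist x y : ℝ) : ℂ)) := by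
  obtain ⟨o⟩ := hc.nonempty
  have := isPDKernel_inner (fun x => treeVec hc o s (G.dist o x) x)
  convert this using 3 with x y
  exact (inner_treeVec hc ha o s hs _ x y le_rfl).symm

/-- Positive definiteness passes to integrals over `s`. -/
lemma isPDKernel_of_measure (hc : G.Connected) (ha : G.IsAcyclic)
    (μ : Measure (Set.Icc (-1 : ℝ) 1)) [IsFiniteMeasure μ] :
    IsPDKernel (fun x y => ∫ s, (((s : ℝ) ^ G.dist x y : ℝ) : ℂ) ∂μ) := by
  intro n x z
  have hinteg : ∀ (m : ℕ), Integrable (fun s : Set.Icc (-1 : ℝ) 1 => (((s : ℝ) ^ m : ℝ) : ℂ)) μ :=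
    fun m => (Continuous.integrable_of_hasCompactSupport (by fun_prop)
      (HasCompactSupport.of_compactSpace _))
  have : ∑ i, ∑ j, (∫ s, (((s : ℝ) ^ G.dist (x i) (x j) : ℝ) : ℂ) ∂μ) * (starRingEnd ℂ) (z i) * z j
      = ∫ s, ∑ i, ∑ j, (((s : ℝ) ^ G.dist (x i) (x j) : ℝ) : ℂ) * (starRingEnd ℂ) (z i) * z j ∂μ := by
    rw [integral_finsetSum _ fun i _ => integrable_finsetSum _ fun j _ =>
      ((hinteg _).mul_const _).mul_const _]
    refine Finset.sum_congr rfl fun i _ => ?_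
    rw [integral_finsetSum _ fun j _ => ((hinteg _).mul_const _).mul_const _]
    refine Finset.sum_congr rfl fun j _ => ?_
    rw [integral_mul_const, integral_mul_const]
  simp only [this]
  refine integral_nonneg fun s => isPDKernel_pow_dist hc ha s ?_ n x z
  have := s.2.1
  have := s.2.2
  nlinarith

end Tree

/-! ### A model of the tree and Hankel positivity -/

/-- The tree of finite words over `ℕ`, in which `l` is joined to `a :: l`. -/
def wordTree : SimpleGraph (List ℕ) where
  Adj x y := (∃ a, y = a :: x) ∨ ∃ a, x = a :: y
  symm := ⟨fun _ _ h => h.symm⟩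
  loopless := ⟨fun x h => by rcases h with ⟨a, h⟩ | ⟨a, h⟩ <;> simpa using congrArg List.length h⟩

lemma wordTree_adj_cons (a : ℕ) (l : List ℕ) : wordTree.Adj (a :: l) l := Or.inr ⟨a, rfl⟩

lemma wordTree_connected : wordTree.Connected := by
  have h : ∀ l, wordTree.Reachable l [] := fun l => by
    induction l with
    | nil => exact SimpleGraph.Reachable.refl _
    | cons a l ih => exact (wordTree_adj_cons a l).reachable.trans ih
  exact ⟨fun x y => (h x).trans (h y).symm⟩

/-- Deleting the edge from `l` to `a :: l` disconnects the words with suffix `a :: l` from the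
others, so every edge is a bridge. -/
lemma wordTree_isAcyclic : wordTree.IsAcyclic := by
  have main : ∀ (a : ℕ) (l : List ℕ), ¬ (wordTree.deleteEdges {s(l, a :: l)}).Reachable l (a :: l) := by
    rintro a l ⟨w⟩
    have step : ∀ x y, (wordTree.deleteEdges {s(l, a :: l)}).Adj x y →
        ((a :: l) <:+ x ↔ (a :: l) <:+ y) := by
      intro x y h
      rw [SimpleGraph.deleteEdges_adj] at h
      obtain ⟨⟨b, rfl⟩ | ⟨b, rfl⟩, h2⟩ := h
      · rw [List.suffix_cons_iff]
        refine ⟨Or.inr, fun h => h.resolve_left fun h => h2 ?_⟩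
        simp only [List.cons.injEq] at h
        simp [h.1, h.2]
      · rw [List.suffix_cons_iff]
        refine ⟨fun h => h.resolve_left fun h => h2 ?_, Or.inr⟩
        simp only [List.cons.injEq] at h
        simp [h.1, h.2, Sym2.eq_swap]
    have inv : ∀ x y, (wordTree.deleteEdges {s(l, a :: l)}).Walk x y →
        ((a :: l) <:+ x ↔ (a :: l) <:+ y) := by
      intro x y w
      induction w with
      | nil => exact Iff.rfl
      | cons h _ ih => exact (step _ _ h).trans ih
    have h := ((inv _ _ w).mpr List.suffix_rfl).length_le
    simp at h
  rw [SimpleGraph.isAcyclic_iff_forall_adj_isBridge]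
  rintro x y (⟨a, rfl⟩ | ⟨a, rfl⟩)
  · exact main a x
  · rw [Sym2.eq_swap]; exact main a y

lemma wordTree_isInfTree : IsInfTree wordTree := by
  refine ⟨wordTree_connected, wordTree_isAcyclic, fun v => ⟨Set.to_countable _, ?_⟩⟩
  refine (Set.infinite_range_of_injective (f := fun a : ℕ => a :: v) fun a b h => ?_).mono ?_
  · simpa using h
  · rintro _ ⟨a, rfl⟩
    exact Or.inl ⟨a, rfl⟩

lemma wordTree_dist_replicate_nil (i k : ℕ) : wordTree.dist (List.replicate k i) [] ≤ k := by
  induction k with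
  | zero => simp
  | succ k ih =>
    have := wordTree_connected.dist_triangle (u := List.replicate (k + 1) i)
      (v := List.replicate k i) (w := [])
    have h1 : wordTree.dist (List.replicate (k + 1) i) (List.replicate k i) = 1 :=
      SimpleGraph.dist_eq_one_iff_adj.mpr (wordTree_adj_cons i (List.replicate k i))
    omega

/-- Words on two different rays issuing from the root are joined through the root. The lower bound
comes from a `1`-Lipschitz function: the length, with a sign that tells whether the
first step from the root (the last letter of the word) is `i`. -/
lemma wordTree_dist_replicate (i j k l : ℕ) (hij : i ≠ j) :
    wordTree.dist (List.replicate k i) (List.replicate l j) = k + l := by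
  apply le_antisymm
  · have := wordTree_connected.dist_triangle (u := List.replicate k i)
      (v := []) (w := List.replicate l j)
    have h1 := wordTree_dist_replicate_nil i k
    have h2 := wordTree_dist_replicate_nil j l
    rw [SimpleGraph.dist_comm] at h2
    omega
  · let f : List ℕ → ℤ := fun w => if w.getLast? = some i then w.length else -w.length
    have hf : ∀ (a : ℕ) (w : List ℕ), |f (a :: w) - f w| ≤ 1 := by
      intro a w
      cases w with
      | nil => simp only [f]; split_ifs <;> simp_all
      | cons b w =>
        simp only [f, List.getLast?_cons_cons, List.length_cons]
        split_ifs <;> push_cast <;> rw [abs_le] <;> constructor <;> linarith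
    have hw : ∀ x y (w : wordTree.Walk x y), |f x - f y| ≤ w.length := by
      intro x y w
      induction w with
      | nil => simp
      | @cons x y z h w ih =>
        have h1 : |f x - f y| ≤ 1 := by
          rcases h with ⟨a, rfl⟩ | ⟨a, rfl⟩
          · rw [abs_sub_comm]; exact hf _ _
          · exact hf _ _
        have := abs_sub_le (f x) (f y) (f z)
        rw [SimpleGraph.Walk.length_cons]
        push_cast
        linarith
    obtain ⟨w, hl⟩ := wordTree_connected.exists_walk_length_eq_dist
      (List.replicate k i) (List.replicate l j)
    have h := (le_abs_self _).trans (hw _ _ w)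
    have h1 : f (List.replicate k i) = k := by
      cases k <;> simp [f, List.getLast?_replicate]
    have h2 : f (List.replicate l j) = -l := by
      simp [f, List.getLast?_replicate]
      intro _ h; exact absurd h.symm hij
    rw [h1, h2, hl] at h
    omega

lemma IsPDKernel.sum_nonneg {X ι : Type*} [Fintype ι] {ψ : X → X → ℂ} (h : IsPDKernel ψ)
    (x : ι → X) (z : ι → ℂ) :
    0 ≤ ∑ i, ∑ j, ψ (x i) (x j) * (starRingEnd ℂ) (z i) * z j := by
  let e := (Fintype.equivFin ι).symm
  have := h _ (x ∘ e) (z ∘ e)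
  simp only [Function.comp] at this
  rw [e.sum_comp (fun i => ∑ j, ψ (x i) (x (e j)) * (starRingEnd ℂ) (z i) * z (e j))] at this
  simpa only [fun i => e.sum_comp (fun j => ψ (x i) (x j) * (starRingEnd ℂ) (z i) * z j)] using this

/-- The `2 × 2` condition at two vertices at distance `n`: `φ` is real and bounded by `φ 0`. -/
lemma im_eq_zero_and_abs_le {φ : ℕ → ℂ} (h : IsPDKernel (fun x y => φ (wordTree.dist x y)))
    (n : ℕ) : (φ n).im = 0 ∧ |(φ n).re| ≤ (φ 0).re := by
  have hd : wordTree.dist (List.replicate n 0) [] = n := by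
    simpa using wordTree_dist_replicate 0 1 n 0 (by simp)
  have hd' : wordTree.dist [] (List.replicate n 0) = n := by rw [SimpleGraph.dist_comm, hd]
  have h0 := h 1 ![[]] ![1]
  have h1 := h 2 ![List.replicate n 0, []] ![1, 1]
  have h2 := h 2 ![List.replicate n 0, []] ![1, -1]
  simp [Fin.sum_univ_two, hd, hd', Complex.le_def] at h0 h1 h2
  refine ⟨by linarith, abs_le.mpr ⟨by linarith, by linarith⟩⟩

/-- Averaging over `N` rays issuing from the root, almost all pairs of vertices lie on different
rays, where the distance is the sum of the levels; letting `N → ∞` shows that the Hankel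
matrices of `φ` are positive semidefinite. -/
lemma hankel_nonneg {φ : ℕ → ℂ} (h : IsPDKernel (fun x y => φ (wordTree.dist x y)))
    (K : ℕ) (a : ℕ → ℝ) :
    0 ≤ ∑ k ∈ range K, ∑ l ∈ range K, a k * a l * (φ (k + l)).re := by
  set H := ∑ k ∈ range K, ∑ l ∈ range K, a k * a l * (φ (k + l)).re with hH
  set C := ∑ k ∈ range K, ∑ l ∈ range K, |a k * a l| * (φ 0).re with hC
  have key : ∀ N : ℕ, 0 ≤ (N : ℝ) * (N * H + (C - H)) := by
    intro N
    have h1 := h.sum_nonneg (ι := Fin N × Fin K) (fun p => List.replicate p.2 p.1)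
      (fun p => (a p.2 : ℂ))
    have h2 := (Complex.le_def.mp h1).1
    simp only [Fintype.sum_prod_type, Complex.re_sum, Complex.zero_re, Complex.conj_ofReal,
      Complex.re_mul_ofReal] at h2
    have h3 : ∀ i j : Fin N, ∑ k : Fin K, ∑ l : Fin K,
        (φ (wordTree.dist (List.replicate k i) (List.replicate l j))).re * a k * a l
          ≤ H + if i = j then C - H else 0 := by
      intro i j
      split_ifs with hij
      · rw [add_sub_cancel, hC, ← Fin.sum_univ_eq_sum_range]
        simp only [← Fin.sum_univ_eq_sum_range]
        refine Finset.sum_le_sum fun k _ => Finset.sum_le_sum fun l _ => ?_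
        refine (le_abs_self _).trans ?_
        rw [mul_assoc, abs_mul, mul_comm]
        exact mul_le_mul_of_nonneg_left (im_eq_zero_and_abs_le h _).2 (abs_nonneg _)
      · rw [add_zero, hH, ← Fin.sum_univ_eq_sum_range]
        simp only [← Fin.sum_univ_eq_sum_range]
        refine le_of_eq (Finset.sum_congr rfl fun k _ => Finset.sum_congr rfl fun l _ => ?_)
        rw [wordTree_dist_replicate _ _ _ _ (fun h => hij (Fin.ext h))]
        ring
    have h4 : 0 ≤ ∑ i : Fin N, ∑ j : Fin N, (H + if i = j then C - H else 0) := by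
      refine h2.trans ?_
      refine Finset.sum_le_sum fun i _ => ?_
      rw [Finset.sum_comm]
      refine Finset.sum_le_sum fun j _ => h3 i j
    simp [Finset.sum_add_distrib] at h4
    linarith
  by_contra! hneg
  obtain ⟨N, hN⟩ := exists_nat_gt ((C - H) / (-H))
  rw [div_lt_iff₀ (by linarith)] at hN
  have h5 := key (N + 1)
  push_cast at h5
  have h6 : (0 : ℝ) < N + 1 := by positivity
  have h7 := nonneg_of_mul_nonneg_right h5 h6
  nlinarith

/-! ### Positive functionals on polynomials -/

section Moment

open Polynomial

/-- The linear functional on real polynomials sending `X ^ n` to `f n`. -/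
noncomputable def momentFunctional (f : ℕ → ℝ) : ℝ[X] →ₗ[ℝ] ℝ :=
  Polynomial.lsum fun n => LinearMap.mulRight ℝ (f n)

lemma momentFunctional_monomial (f : ℕ → ℝ) (n : ℕ) (a : ℝ) :
    momentFunctional f (monomial n a) = a * f n := by
  simp [momentFunctional, Polynomial.lsum_apply, Polynomial.sum_monomial_index]

lemma momentFunctional_mul_self (f : ℕ → ℝ) (p : ℝ[X]) :
    momentFunctional f (p * p) = ∑ k ∈ range (p.natDegree + 1), ∑ l ∈ range (p.natDegree + 1),
      p.coeff k * p.coeff l * f (k + l) := by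
  conv_lhs => rw [p.as_sum_range]
  simp only [Finset.sum_mul_sum, map_sum, monomial_mul_monomial, momentFunctional_monomial]

lemma abs_momentFunctional_X_pow_mul_le (f : ℕ → ℝ) (hf : ∀ n, |f n| ≤ f 0) (p : ℝ[X]) :
    ∃ B, ∀ m, |momentFunctional f (X ^ m * p)| ≤ B := by
  refine ⟨∑ k ∈ range (p.natDegree + 1), |p.coeff k| * f 0, fun m => ?_⟩
  conv_lhs => rw [p.as_sum_range]
  simp only [Finset.mul_sum, map_sum, X_pow_mul_monomial, momentFunctional_monomial]
  refine (Finset.abs_sum_le_sum_abs _ _).trans (Finset.sum_le_sum fun k _ => ?_)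
  rw [abs_mul]
  exact mul_le_mul_of_nonneg_left (hf _) (abs_nonneg _)

/-- A bounded sequence satisfying the Cauchy–Schwarz inequality `a m ^ 2 ≤ a 0 * a (2 m)` is
bounded by `a 0`: otherwise `|a (2 ^ k * m)| / a 0` would grow like `t ^ (2 ^ k)` with `t > 1`. -/
lemma abs_le_of_sq_le (a : ℕ → ℝ) (B : ℝ) (hB : ∀ m, |a m| ≤ B) (h0 : 0 ≤ a 0)
    (hcs : ∀ m, a m ^ 2 ≤ a 0 * a (2 * m)) (m : ℕ) : |a m| ≤ a 0 := by
  rcases h0.eq_or_lt with h | h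
  · have := hcs m
    rw [← h, zero_mul] at this
    rw [← h, pow_eq_zero_iff (two_ne_zero) |>.mp (le_antisymm this (sq_nonneg _)), abs_zero]
  by_contra! hlt
  set t := |a m| / a 0 with ht
  have ht1 : 1 < t := by rw [ht, one_lt_div h]; exact hlt
  have key : ∀ k : ℕ, t ^ (2 ^ k) * a 0 ≤ |a (2 ^ k * m)| := by
    intro k
    induction k with
    | zero => simp [ht, div_mul_cancel₀ _ h.ne']
    | succ k ih =>
      have h1 := hcs (2 ^ k * m)
      have h2 : (t ^ (2 ^ k) * a 0) ^ 2 ≤ a (2 ^ k * m) ^ 2 := by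
        rw [← sq_abs (a (2 ^ k * m))]
        exact pow_le_pow_left₀ (by positivity) ih 2
      have h3 : a 0 * (t ^ (2 ^ (k + 1)) * a 0) ≤ a 0 * a (2 * (2 ^ k * m)) := by
        calc _ = (t ^ (2 ^ k) * a 0) ^ 2 := by ring
          _ ≤ _ := h2.trans h1
      have h4 := le_of_mul_le_mul_left h3 h
      rw [pow_succ' 2 k, mul_assoc, ← mul_assoc, ← pow_succ', pow_succ'] at *
      exact h4.trans ((le_abs_self _).trans (by rw [mul_assoc]))
  obtain ⟨n, hn⟩ := pow_unbounded_of_one_lt (B / a 0) ht1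
  rw [div_lt_iff₀ h] at hn
  have h5 : t ^ n ≤ t ^ (2 ^ n) := pow_le_pow_right₀ ht1.le Nat.lt_two_pow_self.le
  have h6 := mul_le_mul_of_nonneg_right h5 h.le
  linarith [key n, hB (2 ^ n * m)]

/-- The polynomials `q²`, `q² (1 - X)`, `q² (1 + X)` and `q² (1 - X²)`. They form a
multiplicative monoid, each of whose elements is manifestly nonnegative on `[-1, 1]`. -/
def posMonoid : Submonoid ℝ[X] where
  carrier := {p | ∃ q : ℝ[X], p = q * q ∨ p = q * q * (1 - X) ∨ p = q * q * (1 + X) ∨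
    p = q * q * ((1 - X) * (1 + X))}
  one_mem' := ⟨1, Or.inl (by simp)⟩
  mul_mem' := by
    rintro _ _ ⟨q, rfl | rfl | rfl | rfl⟩ ⟨r, rfl | rfl | rfl | rfl⟩
    · exact ⟨q * r, Or.inl (by ring)⟩
    · exact ⟨q * r, Or.inr (Or.inl (by ring))⟩
    · exact ⟨q * r, Or.inr (Or.inr (Or.inl (by ring)))⟩
    · exact ⟨q * r, Or.inr (Or.inr (Or.inr (by ring)))⟩
    · exact ⟨q * r, Or.inr (Or.inl (by ring))⟩
    · exact ⟨q * r * (1 - X), Or.inl (by ring)⟩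
    · exact ⟨q * r, Or.inr (Or.inr (Or.inr (by ring)))⟩
    · exact ⟨q * r * (1 - X), Or.inr (Or.inr (Or.inl (by ring)))⟩
    · exact ⟨q * r, Or.inr (Or.inr (Or.inl (by ring)))⟩
    · exact ⟨q * r, Or.inr (Or.inr (Or.inr (by ring)))⟩
    · exact ⟨q * r * (1 + X), Or.inl (by ring)⟩
    · exact ⟨q * r * (1 + X), Or.inr (Or.inl (by ring))⟩
    · exact ⟨q * r, Or.inr (Or.inr (Or.inr (by ring)))⟩
    · exact ⟨q * r * (1 - X), Or.inr (Or.inr (Or.inl (by ring)))⟩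
    · exact ⟨q * r * (1 + X), Or.inr (Or.inl (by ring))⟩
    · exact ⟨q * r * ((1 - X) * (1 + X)), Or.inl (by ring)⟩

/-- The semiring of polynomials generated by the squares, `1 - X` and `1 + X`. -/
noncomputable def posSemiring : Subsemiring ℝ[X] := posMonoid.subsemiringClosure

lemma mem_posSemiring_of_mem {p : ℝ[X]} (hp : p ∈ posMonoid) : p ∈ posSemiring := by
  rw [posSemiring, Submonoid.subsemiringClosure_eq_closure]
  exact Subsemiring.subset_closure hp

lemma sq_mem_posSemiring (q : ℝ[X]) : q * q ∈ posSemiring :=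
  mem_posSemiring_of_mem ⟨q, Or.inl rfl⟩

lemma C_mem_posSemiring {c : ℝ} (hc : 0 ≤ c) : C c ∈ posSemiring := by
  have := sq_mem_posSemiring (C (Real.sqrt c))
  rwa [← C_mul, Real.mul_self_sqrt hc] at this

/-- A polynomial that is positive on `[-1, 1]` lies in the semiring generated by the squares and
`1 ± X`. By induction on the degree: a root `c` outside `[-1, 1]` splits off a factor
`(|c| - 1) + (1 ± X)`, and a nonreal root `z` splits off the factor
`(X - re z) ^ 2 + (im z) ^ 2`. -/
lemma mem_posSemiring_of_pos (n : ℕ) (p : ℝ[X]) (hn : p.natDegree ≤ n)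
    (hp : ∀ x ∈ Set.Icc (-1 : ℝ) 1, 0 < p.eval x) : p ∈ posSemiring := by
  induction n generalizing p with
  | zero =>
    rw [eq_C_of_natDegree_le_zero hn] at hp ⊢
    have := hp 0 (by simp)
    rw [eval_C] at this
    exact C_mem_posSemiring this.le
  | succ n ih =>
    by_cases hd : p.natDegree = 0
    · exact ih p (by omega) hp
    have hp0 : p ≠ 0 := by rintro rfl; simp at hd
    obtain ⟨z, hz⟩ := Complex.exists_root (f := p.map (algebraMap ℝ ℂ)) (by
      rw [degree_map]; exact natDegree_pos_iff_degree_pos.mp (Nat.pos_of_ne_zero hd))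
    have hz' : aeval z p = 0 := by
      rwa [IsRoot, eval_map_algebraMap] at hz
    by_cases him : z.im = 0
    · have hroot : p.IsRoot z.re := by
        have : z = ((z.re : ℝ) : ℂ) := Complex.ext (by simp) (by simp [him])
        rw [this, ← Complex.coe_algebraMap, aeval_algebraMap_apply, Complex.coe_algebraMap] at hz'
        simpa using hz'
      obtain ⟨q, hq⟩ := dvd_iff_isRoot.mpr hroot
      set c := z.re
      have hq0 : q ≠ 0 := by rintro rfl; simp at hq; exact hp0 hq
      have hdeg : q.natDegree ≤ n := by
        rw [hq, natDegree_mul (X_sub_C_ne_zero c) hq0, natDegree_X_sub_C] at hn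
        omega
      have hpe : ∀ x, p.eval x = (x - c) * q.eval x := fun x => by rw [hq]; simp
      have hc : c ∉ Set.Icc (-1 : ℝ) 1 := fun hc => by
        have := hp c hc
        rw [hpe] at this
        simp at this
      rcases lt_or_ge c (-1) with hc1 | hc1
      · have hlin : (X - C c : ℝ[X]) = C (-1 - c) + (1 + X) := by simp; ring
        rw [hq, hlin]
        refine mul_mem (add_mem (C_mem_posSemiring (by linarith))
          (mem_posSemiring_of_mem ⟨1, by simp⟩)) (ih q hdeg fun x hx => ?_)
        have := hp x hx
        rw [hpe] at this
        exact pos_of_mul_pos_right this (by linarith [hx.1])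
      · have hc2 : 1 < c := by
          by_contra! h
          exact hc ⟨hc1, h⟩
        have hlin : p = (C (c - 1) + (1 - X)) * (-q) := by rw [hq]; simp; ring
        rw [hlin]
        refine mul_mem (add_mem (C_mem_posSemiring (by linarith))
          (mem_posSemiring_of_mem ⟨1, by simp⟩)) (ih (-q) (by simpa) fun x hx => ?_)
        have := hp x hx
        rw [hpe] at this
        rw [eval_neg]
        have h2 : 0 < (c - x) * -q.eval x := by linarith
        exact pos_of_mul_pos_right h2 (by linarith [hx.2])
    · obtain ⟨q, hq⟩ := p.quadratic_dvd_of_aeval_eq_zero_im_ne_zero hz' him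
      have hquad : (X ^ 2 - C (2 * z.re) * X + C (‖z‖ ^ 2) : ℝ[X])
          = (X - C z.re) * (X - C z.re) + C (z.im ^ 2) := by
        rw [Complex.sq_norm, Complex.normSq_apply]
        simp only [map_mul, map_add, map_pow, C_ofNat]
        ring
      have hdq : (X ^ 2 - C (2 * z.re) * X + C (‖z‖ ^ 2) : ℝ[X]).natDegree = 2 := by
        compute_degree!
      rw [hq] at hn hp hp0 ⊢
      have hq0 : q ≠ 0 := right_ne_zero_of_mul hp0
      rw [natDegree_mul (left_ne_zero_of_mul hp0) hq0, hdq] at hn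
      rw [hquad] at hp ⊢
      refine mul_mem (add_mem (sq_mem_posSemiring _) (C_mem_posSemiring (sq_nonneg _)))
        (ih q (by omega) fun x hx => ?_)
      have := hp x hx
      rw [eval_mul] at this
      refine pos_of_mul_pos_right this ?_
      simp only [eval_add, eval_mul, eval_sub, eval_X, eval_C]
      nlinarith [mul_self_nonneg (x - z.re), sq_nonneg z.im]

section Functional

variable {f : ℕ → ℝ}

/-- The Cauchy–Schwarz inequality for the semi-inner product `⟨p, q⟩ = L (p q)`. -/
lemma momentFunctional_cauchy_schwarz (hpos : ∀ p : ℝ[X], 0 ≤ momentFunctional f (p * p))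
    (p q : ℝ[X]) : momentFunctional f (p * q) ^ 2
      ≤ momentFunctional f (p * p) * momentFunctional f (q * q) := by
  set L := momentFunctional f
  have h : ∀ t : ℝ, 0 ≤ L (q * q) * (t * t) + 2 * L (p * q) * t + L (p * p) := by
    intro t
    have := hpos (p + t • q)
    have e : (p + t • q) * (p + t • q) = p * p + (2 * t) • (p * q) + (t * t) • (q * q) := by
      simp only [smul_eq_C_mul, map_mul, C_ofNat]; ring
    rw [e] at this
    simp only [map_add, map_smul, smul_eq_mul] at this
    linarith
  have := discrim_le_zero h
  rw [discrim] at this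
  nlinarith

/-- A functional that is positive on squares and has bounded moments is positive on the monoid
of weighted squares: with `a m = L (X ^ m q²)`, `|a 1|` and `|a 2|` are at most `a 0`. -/
lemma momentFunctional_nonneg_of_mem (hf : ∀ n, |f n| ≤ f 0)
    (hpos : ∀ p : ℝ[X], 0 ≤ momentFunctional f (p * p)) {p : ℝ[X]} (hp : p ∈ posMonoid) :
    0 ≤ momentFunctional f p := by
  obtain ⟨q, hq⟩ := hp
  set L := momentFunctional f
  obtain ⟨B, hB⟩ := abs_momentFunctional_X_pow_mul_le f hf (q * q)
  have key := abs_le_of_sq_le (fun m => L (X ^ m * (q * q))) B hB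
    (by simpa using hpos q) (fun m => by
      have h1 := momentFunctional_cauchy_schwarz hpos q (X ^ m * q)
      have e1 : q * (X ^ m * q) = X ^ m * (q * q) := by ring
      have e2 : X ^ m * q * (X ^ m * q) = X ^ (2 * m) * (q * q) := by ring
      rw [e1, e2] at h1
      simpa using h1)
  have k1 := abs_le.mp (key 1)
  have k2 := abs_le.mp (key 2)
  simp only [pow_zero, one_mul, pow_one] at k1 k2
  rcases hq with rfl | rfl | rfl | rfl
  · exact hpos q
  · have e : q * q * (1 - X) = q * q - X * (q * q) := by ring
    rw [e, map_sub]
    linarith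
  · have e : q * q * (1 + X) = q * q + X * (q * q) := by ring
    rw [e, map_add]
    linarith
  · have e : q * q * ((1 - X) * (1 + X)) = q * q - X ^ 2 * (q * q) := by ring
    rw [e, map_sub]
    linarith

lemma momentFunctional_nonneg_of_nonneg (hf : ∀ n, |f n| ≤ f 0)
    (hpos : ∀ p : ℝ[X], 0 ≤ momentFunctional f (p * p)) {p : ℝ[X]}
    (hp : ∀ x ∈ Set.Icc (-1 : ℝ) 1, 0 ≤ p.eval x) : 0 ≤ momentFunctional f p := by
  have hS : ∀ r ∈ posSemiring, 0 ≤ momentFunctional f r := by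
    intro r hr
    change r ∈ AddSubmonoid.closure (posMonoid : Set ℝ[X]) at hr
    induction hr using AddSubmonoid.closure_induction with
    | mem x hx => exact momentFunctional_nonneg_of_mem hf hpos hx
    | zero => simp
    | add x y _ _ h1 h2 => rw [map_add]; exact add_nonneg h1 h2
  have hf0 : 0 ≤ f 0 := (abs_nonneg _).trans (hf 0)
  refine le_of_forall_pos_le_add fun ε hε => ?_
  have h1 := hS (p + C (ε / (f 0 + 1))) (mem_posSemiring_of_pos _ _ le_rfl fun x hx => by
    rw [eval_add, eval_C]
    have : 0 < ε / (f 0 + 1) := by positivity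
    linarith [hp x hx])
  rw [map_add, ← monomial_zero_left, momentFunctional_monomial] at h1
  refine h1.trans (add_le_add le_rfl ?_)
  rw [div_mul_eq_mul_div, div_le_iff₀ (by positivity)]
  nlinarith

end Functional

/-! ### The representing measure -/

open CompactlySupported

/-- Restriction of polynomials to `[-1, 1]`, as compactly supported continuous functions. -/
noncomputable def polyToCc : ℝ[X] →ₗ[ℝ] C_c(Set.Icc (-1 : ℝ) 1, ℝ) where
  toFun p := ⟨⟨fun x => p.eval (x : ℝ), by fun_prop⟩, HasCompactSupport.of_compactSpace _⟩
  map_add' p q := by ext x; simp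
  map_smul' c p := by ext x; simp

lemma polyToCc_apply (p : ℝ[X]) (x : Set.Icc (-1 : ℝ) 1) : polyToCc p x = p.eval (x : ℝ) := rfl

lemma polyToCc_injective : Function.Injective polyToCc := by
  intro p q h
  refine Polynomial.eq_of_infinite_eval_eq p q
    ((Set.Icc_infinite (show (-1 : ℝ) < 1 by norm_num)).mono fun x hx => ?_)
  exact DFunLike.congr_fun h ⟨x, hx⟩

/-- The moment problem on `[-1, 1]`: a bounded sequence with positive Hankel forms is a moment
sequence. The functional extends to a positive functional on continuous functions by the M. Riesz
extension theorem, and is then an integral by the Riesz–Markov–Kakutani theorem. -/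
lemma exists_measure_of_hankel {f : ℕ → ℝ} (hf : ∀ n, |f n| ≤ f 0)
    (hpos : ∀ p : ℝ[X], 0 ≤ momentFunctional f (p * p)) :
    ∃ μ : Measure (Set.Icc (-1 : ℝ) 1), IsFiniteMeasure μ ∧
      ∀ n : ℕ, f n = ∫ s, (s : ℝ) ^ n ∂μ := by
  let e := LinearEquiv.ofInjective polyToCc polyToCc_injective
  let F : C_c(Set.Icc (-1 : ℝ) 1, ℝ) →ₗ.[ℝ] ℝ :=
    ⟨LinearMap.range polyToCc, (momentFunctional f).comp e.symm.toLinearMap⟩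
  have hF : ∀ p, F (e p) = momentFunctional f p := fun p => by
    change momentFunctional f (e.symm (e p)) = _
    rw [e.symm_apply_apply]
  let P : PointedCone ℝ C_c(Set.Icc (-1 : ℝ) 1, ℝ) :=
    { carrier := {u | ∀ x, 0 ≤ u x}
      add_mem' := fun hu hv x => add_nonneg (hu x) (hv x)
      zero_mem' := fun _ => le_rfl
      smul_mem' := fun c _ hu x => mul_nonneg c.2 (hu x) }
  obtain ⟨g, hg1, hg2⟩ := riesz_extension P F
    (fun x hx => by
      obtain ⟨p, rfl⟩ := e.surjective x
      rw [hF]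
      refine momentFunctional_nonneg_of_nonneg hf hpos fun x hx' => ?_
      exact hx ⟨x, hx'⟩)
    (fun y => by
      -- Constants dominate every continuous function on the compact interval.
      obtain ⟨M, hM⟩ := (isCompact_range y.continuous).bddBelow
      refine ⟨e (C (-M)), ?_⟩
      intro x
      have h1 : M ≤ y x := hM ⟨x, rfl⟩
      change 0 ≤ polyToCc (C (-M)) x + y x
      rw [polyToCc_apply, eval_C]
      linarith)
  let Λ : C_c(Set.Icc (-1 : ℝ) 1, ℝ) →ₚ[ℝ] ℝ := PositiveLinearMap.mk₀ g fun x hx =>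
    hg2 x hx
  refine ⟨RealRMK.rieszMeasure Λ, inferInstance, fun n => ?_⟩
  have h := RealRMK.integral_rieszMeasure Λ (polyToCc (X ^ n))
  simp only [polyToCc_apply, eval_pow, eval_X] at h
  rw [h]
  change f n = g (polyToCc (X ^ n))
  rw [show polyToCc (X ^ n) = (e (X ^ n) : C_c(Set.Icc (-1 : ℝ) 1, ℝ)) from rfl, hg1 (e (X ^ n)),
    hF, X_pow_eq_monomial, momentFunctional_monomial, one_mul]

end Moment

theorem stmt_2 (φ : ℕ → ℂ) :
    (∀ (V : Type) (G : SimpleGraph V), IsInfTree G →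
        IsPDKernel (fun x y => φ (G.dist x y)))
      ↔ ∃ μ : Measure (Set.Icc (-1 : ℝ) 1), IsFiniteMeasure μ ∧
          ∀ n : ℕ, φ n = ∫ s, (((s : ℝ) ^ n : ℝ) : ℂ) ∂μ := by
  constructor
  · intro h
    have hPD := h _ wordTree wordTree_isInfTree
    obtain ⟨μ, hμ, hm⟩ := exists_measure_of_hankel (f := fun n => (φ n).re)
      (fun n => (im_eq_zero_and_abs_le hPD n).2)
      (fun p => by
        rw [momentFunctional_mul_self]
        exact hankel_nonneg hPD _ p.coeff)
    refine ⟨μ, hμ, fun n => ?_⟩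
    rw [integral_complex_ofReal, ← hm n]
    exact Complex.ext (by simp) (by simp [(im_eq_zero_and_abs_le hPD n).1])
  · rintro ⟨μ, hμ, hm⟩ V G ⟨hc, ha, -⟩
    simp only [hm]
    exact isPDKernel_of_measure hc ha μ
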